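/- Characteristic polynomial of the correlation matrix for f(z) = z^{-2}(z−a)²(z−b)² with one zero inside and one outside the unit circle (Example 3). Let a, b ∈ ℝ with 0 < |a| < 1 < |b| and a·b ≠ 1, let u(z) = (z−a)(z−b)/((1−a z)(1−b z)), and for λ ∈ ℂ let Φ_λ be the 2×2-matrix-valued symbol on the unit circle with Φ_λ(e^{iθ}) = [[iλ, u(e^{iθ})], [−u(e^{−iθ}), iλ]]. Then for every integer N ≥ 2 and every λ ∈ ℂ, D_N[Φ_λ] = (1 − λ²)^{N−2} · ( λ⁴ + (λ²/(b−a)²)·( 2(1−a²)(1−b²) − (1−ab)²·(a^{2N} + b^{−2N}) ) + ( ( a^N b^{−N} (1−ab)² − (1−a²)(1−b²) ) / (b−a)² )² ). -/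

import Mathlib

open scoped BigOperators
open Filter

/-- The `k`-th Fourier coefficient of a symbol `t` on the unit circle. -/
noncomputable def symbolCoeff (t : ℂ → ℂ) (k : ℤ) : ℂ :=
  (1 / (2 * Real.pi)) *
    ∫ θ in (0:ℝ)..(2 * Real.pi),
      t (Complex.exp (Complex.I * (θ : ℂ))) * Complex.exp (-(Complex.I * (k : ℂ) * (θ : ℂ)))

/-- The `N × N` Toeplitz determinant `D_N[t]` generated by the symbol `t`. -/
noncomputable def toeplitzDet (t : ℂ → ℂ) (N : ℕ) : ℂ :=
  Matrix.det (Matrix.of fun m n : Fin N => symbolCoeff t ((m : ℤ) - (n : ℤ)))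

/-- The `k`-th (matrix) Fourier coefficient of a `2 × 2`-matrix-valued symbol. -/
noncomputable def blockSymbolCoeff (Φ : ℂ → Matrix (Fin 2) (Fin 2) ℂ) (k : ℤ) :
    Matrix (Fin 2) (Fin 2) ℂ :=
  Matrix.of fun i j => symbolCoeff (fun w => Φ w i j) k

/-- The `2N × 2N` block Toeplitz determinant `D_N[Φ]` generated by the
`2 × 2`-matrix-valued symbol `Φ`. -/
noncomputable def blockToeplitzDet (Φ : ℂ → Matrix (Fin 2) (Fin 2) ℂ) (N : ℕ) : ℂ :=
  Matrix.det (Matrix.of fun p q : Fin N × Fin 2 =>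
    blockSymbolCoeff Φ ((p.1 : ℤ) - (q.1 : ℤ)) p.2 q.2)

section SymbolCoeff

theorem norm_exp_I_mul (θ : ℝ) : ‖Complex.exp (Complex.I * θ)‖ = 1 := by
  rw [mul_comm]
  exact Complex.norm_exp_ofReal_mul_I θ

theorem symbolCoeff_congr {s t : ℂ → ℂ} (h : ∀ w : ℂ, ‖w‖ = 1 → s w = t w) (k : ℤ) :
    symbolCoeff s k = symbolCoeff t k := by
  have hw (θ : ℝ) : s (Complex.exp (Complex.I * θ)) = t (Complex.exp (Complex.I * θ)) :=
    h _ (norm_exp_I_mul θ)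
  simp only [symbolCoeff, hw]

theorem symbolCoeff_add {s t : ℂ → ℂ}
    (hs : Continuous fun θ : ℝ => s (Complex.exp (Complex.I * θ)))
    (ht : Continuous fun θ : ℝ => t (Complex.exp (Complex.I * θ))) (k : ℤ) :
    symbolCoeff (fun w => s w + t w) k = symbolCoeff s k + symbolCoeff t k := by
  have he : Continuous fun θ : ℝ => Complex.exp (-(Complex.I * (k : ℂ) * (θ : ℂ))) := by
    fun_prop
  simp only [symbolCoeff, add_mul]
  rw [intervalIntegral.integral_add ((hs.fun_mul he).intervalIntegrable _ _)
    ((ht.fun_mul he).intervalIntegrable _ _), mul_add]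

theorem symbolCoeff_const_mul (r : ℂ) (t : ℂ → ℂ) (k : ℤ) :
    symbolCoeff (fun w => r * t w) k = r * symbolCoeff t k := by
  simp only [symbolCoeff, mul_assoc r, intervalIntegral.integral_const_mul]
  ring

theorem symbolCoeff_neg (t : ℂ → ℂ) (k : ℤ) :
    symbolCoeff (fun w => -t w) k = -symbolCoeff t k := by
  simpa using symbolCoeff_const_mul (-1) t k

theorem symbolCoeff_comp_inv (t : ℂ → ℂ) (k : ℤ) :
    symbolCoeff (fun w => t w⁻¹) k = symbolCoeff t (-k) := by
  simp only [symbolCoeff]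
  congr 1
  have h := intervalIntegral.integral_comp_sub_left (a := 0) (b := 2 * Real.pi)
    (fun θ : ℝ => t (Complex.exp (Complex.I * (θ : ℂ))) *
      Complex.exp (-(Complex.I * ((-k : ℤ) : ℂ) * (θ : ℂ)))) (2 * Real.pi)
  rw [sub_self, sub_zero] at h
  rw [← h]
  refine intervalIntegral.integral_congr fun θ _ => ?_
  have h₁ : Complex.exp (Complex.I * ((2 * Real.pi - θ : ℝ) : ℂ)) =
      (Complex.exp (Complex.I * (θ : ℂ)))⁻¹ := by
    rw [← Complex.exp_neg, Complex.exp_eq_exp_iff_exists_int]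
    exact ⟨1, by push_cast; ring⟩
  have h₂ : Complex.exp (-(Complex.I * ((-k : ℤ) : ℂ) * ((2 * Real.pi - θ : ℝ) : ℂ))) =
      Complex.exp (-(Complex.I * (k : ℂ) * (θ : ℂ))) := by
    rw [Complex.exp_eq_exp_iff_exists_int]
    exact ⟨k, by push_cast; ring⟩
  simp only [h₁, h₂]

theorem integral_exp_int_mul (k : ℤ) :
    ∫ θ in (0:ℝ)..(2 * Real.pi), Complex.exp (Complex.I * (k : ℂ) * (θ : ℂ)) =
      if k = 0 then 2 * (Real.pi : ℂ) else 0 := by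
  split_ifs with hk
  · simp [hk]
  · rw [integral_exp_mul_complex (by simp [hk])]
    have : Complex.exp (Complex.I * (k : ℂ) * ((2 * Real.pi : ℝ) : ℂ)) = 1 := by
      rw [Complex.exp_eq_one_iff]
      exact ⟨k, by push_cast; ring⟩
    rw [this]
    simp

theorem symbolCoeff_pow (j : ℕ) (k : ℤ) :
    symbolCoeff (fun w => w ^ j) k = if k = j then 1 else 0 := by
  have h (θ : ℝ) : Complex.exp (Complex.I * (θ : ℂ)) ^ j *
      Complex.exp (-(Complex.I * (k : ℂ) * (θ : ℂ))) =
      Complex.exp (Complex.I * ((j - k : ℤ) : ℂ) * (θ : ℂ)) := by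
    rw [← Complex.exp_nat_mul, ← Complex.exp_add]
    push_cast
    ring_nf
  simp only [symbolCoeff, h, integral_exp_int_mul, sub_eq_zero, eq_comm (a := k)]
  have := Real.pi_ne_zero
  split_ifs
  · field_simp
  · simp

theorem symbolCoeff_const (r : ℂ) (k : ℤ) :
    symbolCoeff (fun _ => r) k = if k = 0 then r else 0 := by
  have h := symbolCoeff_const_mul r (fun w => w ^ 0) k
  rw [symbolCoeff_pow] at h
  simpa using h

theorem one_sub_mul_ne_zero {a w : ℂ} (ha : ‖a‖ < 1) (hw : ‖w‖ ≤ 1) : 1 - a * w ≠ 0 := by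
  intro h
  have : ‖a * w‖ = 1 := by rw [← sub_eq_zero.mp h, norm_one]
  rw [norm_mul] at this
  nlinarith [norm_nonneg a]

/-- The Fourier coefficients of the geometric series. -/
theorem symbolCoeff_inv_one_sub {a : ℂ} (ha : ‖a‖ < 1) (k : ℤ) :
    symbolCoeff (fun w => (1 - a * w)⁻¹) k = if 0 ≤ k then a ^ k.toNat else 0 := by
  have hsum : HasSum
      (fun j : ℕ => ∫ θ in (0:ℝ)..(2 * Real.pi), a ^ j * Complex.exp (Complex.I * (θ : ℂ)) ^ j *
        Complex.exp (-(Complex.I * (k : ℂ) * (θ : ℂ))))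
      (∫ θ in (0:ℝ)..(2 * Real.pi), (1 - a * Complex.exp (Complex.I * (θ : ℂ)))⁻¹ *
        Complex.exp (-(Complex.I * (k : ℂ) * (θ : ℂ)))) := by
    refine intervalIntegral.hasSum_integral_of_dominated_convergence (fun j _ => ‖a‖ ^ j)
      (fun j => Continuous.aestronglyMeasurable (by fun_prop)) (fun j => ?_) ?_ ?_ ?_
    · refine .of_forall fun θ _ => le_of_eq ?_
      have : ‖Complex.exp (-(Complex.I * (k : ℂ) * (θ : ℂ)))‖ = 1 := by
        simpa [mul_assoc] using norm_exp_I_mul (-(k * θ))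
      rw [norm_mul, norm_mul, norm_pow, norm_pow, norm_exp_I_mul, this]
      simp
    · exact .of_forall fun θ _ => summable_geometric_of_lt_one (norm_nonneg a) ha
    · exact intervalIntegrable_const
    · refine .of_forall fun θ _ => HasSum.mul_right _ ?_
      simp only [← mul_pow]
      refine hasSum_geometric_of_norm_lt_one ?_
      rwa [norm_mul, norm_exp_I_mul, mul_one]
  have hsum' := hsum.mul_left ((1 : ℂ) / (2 * Real.pi))
  have hterm (j : ℕ) : (1 : ℂ) / (2 * Real.pi) *
      (∫ θ in (0:ℝ)..(2 * Real.pi), a ^ j * Complex.exp (Complex.I * (θ : ℂ)) ^ j *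
        Complex.exp (-(Complex.I * (k : ℂ) * (θ : ℂ)))) = if k = j then a ^ j else 0 := by
    have := symbolCoeff_const_mul (a ^ j) (fun w => w ^ j) k
    rw [symbolCoeff_pow, mul_ite, mul_one, mul_zero] at this
    exact this
  simp only [hterm] at hsum'
  refine hsum'.unique ?_
  split_ifs with hk
  · obtain ⟨n, rfl⟩ := Int.eq_ofNat_of_zero_le hk
    have h (j : ℕ) : (if (n : ℤ) = j then a ^ j else 0) = if j = n then a ^ n else 0 := by
      rcases eq_or_ne j n with rfl | hj
      · simp
      · rw [if_neg hj, if_neg (by omega)]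
    simp only [h, Int.toNat_natCast]
    exact hasSum_ite_eq n (a ^ n)
  · convert hasSum_zero using 2 with j
    exact if_neg (by omega)

theorem continuous_inv_one_sub {a : ℂ} (ha : ‖a‖ < 1) :
    Continuous fun θ : ℝ => (1 - a * Complex.exp (Complex.I * θ))⁻¹ :=
  Continuous.inv₀ (by fun_prop) fun θ => one_sub_mul_ne_zero ha (norm_exp_I_mul θ).le

theorem continuous_inv_one_sub_inv {c : ℂ} (hc : ‖c‖ < 1) :
    Continuous fun θ : ℝ => (1 - c * (Complex.exp (Complex.I * θ))⁻¹)⁻¹ :=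
  Continuous.inv₀
    (continuous_const.sub (continuous_const.mul
      (Continuous.inv₀ (by fun_prop) fun _ => Complex.exp_ne_zero _)))
    fun θ => one_sub_mul_ne_zero hc (by rw [norm_inv, norm_exp_I_mul, inv_one])

end SymbolCoeff

/-- The Fourier coefficients of `(z - a) (z - c⁻¹) / ((1 - a z) (1 - c⁻¹ z))` when
`a` and `c` lie in the open unit disc. -/
noncomputable def blaschkeCoeff (a c : ℂ) : ℤ → ℂ
  | .ofNat 0 => (1 - a ^ 2 - c ^ 2 + a * c) / (1 - a * c)
  | .ofNat (j + 1) => -((c - a) / (1 - a * c) * (1 - a ^ 2) * a ^ j)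
  | .negSucc j => (c - a) / (1 - a * c) * (1 - c ^ 2) * c ^ j

theorem symbolCoeff_blaschke {a c : ℂ} (ha0 : a ≠ 0) (hc0 : c ≠ 0) (ha : ‖a‖ < 1) (hc : ‖c‖ < 1)
    (k : ℤ) :
    symbolCoeff (fun w => ((w - a) * (w - c⁻¹)) / ((1 - a * w) * (1 - c⁻¹ * w))) k =
      blaschkeCoeff a c k := by
  set κ := (c - a) / (1 - a * c) with hκ
  set A := -(κ * (1 - a ^ 2) / a) with hA
  set B := κ * (1 - c ^ 2) / c with hB
  set γ := (1 - a ^ 2 - c ^ 2 + a * c) / (1 - a * c) - A - B with hγ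
  have hac : 1 - a * c ≠ 0 := one_sub_mul_ne_zero ha hc.le
  have hdec (w : ℂ) (hw : ‖w‖ = 1) :
      ((w - a) * (w - c⁻¹)) / ((1 - a * w) * (1 - c⁻¹ * w)) =
        (γ + A * (1 - a * w)⁻¹) + B * (1 - c * w⁻¹)⁻¹ := by
    have hw0 : w ≠ 0 := by rintro rfl; simp at hw
    have h₁ := one_sub_mul_ne_zero ha hw.le
    have h₂ := one_sub_mul_ne_zero hc (w := w⁻¹) (by rw [norm_inv, hw, inv_one])
    have h₃ : w - c ≠ 0 := by
      intro h
      exact h₂ (by rw [← sub_eq_zero.mp h, mul_inv_cancel₀ hw0, sub_self])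
    have h₄ : c - w ≠ 0 := fun h => h₃ (by rw [← neg_sub, h, neg_zero])
    have e₁ : 1 - c * w⁻¹ = (w - c) / w := by field_simp
    have e₂ : 1 - c⁻¹ * w = -(w - c) / c := by field_simp; ring
    have e₃ : w - c⁻¹ = (c * w - 1) / c := by field_simp
    rw [e₁, e₂, e₃, hγ, hA, hB, hκ]
    have h₅ : 1 - w * a ≠ 0 := by rwa [mul_comm]
    field_simp
    ring
  have hca : Continuous fun θ : ℝ => A * (1 - a * Complex.exp (Complex.I * θ))⁻¹ :=
    continuous_const.mul (continuous_inv_one_sub ha)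
  have hcc : Continuous fun θ : ℝ => B * (1 - c * (Complex.exp (Complex.I * θ))⁻¹)⁻¹ :=
    continuous_const.mul (continuous_inv_one_sub_inv hc)
  rw [symbolCoeff_congr hdec,
    symbolCoeff_add (s := fun w => γ + A * (1 - a * w)⁻¹) (t := fun w => B * (1 - c * w⁻¹)⁻¹)
      (continuous_const.add hca) hcc,
    symbolCoeff_add (s := fun _ => γ) (t := fun w => A * (1 - a * w)⁻¹) continuous_const hca,
    symbolCoeff_const_mul, symbolCoeff_const_mul, symbolCoeff_const,
    symbolCoeff_comp_inv (fun w => (1 - c * w)⁻¹), symbolCoeff_inv_one_sub ha,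
    symbolCoeff_inv_one_sub hc]
  match k with
  | .ofNat 0 => simp [blaschkeCoeff, hγ, sub_add_eq_add_sub]
  | .ofNat (j + 1) =>
    have h₁ : ¬ (0 : ℤ) ≤ -((j : ℤ) + 1) := by omega
    have h₂ : (j : ℤ) + 1 ≠ 0 := by omega
    have h₃ : (0 : ℤ) ≤ (j : ℤ) + 1 := by omega
    have h₄ : ((j : ℤ) + 1).toNat = j + 1 := by omega
    simp only [Int.ofNat_eq_natCast, Nat.cast_add, Nat.cast_one, if_neg h₁, if_neg h₂, if_pos h₃,
      h₄]
    change _ = -(κ * (1 - a ^ 2) * a ^ j)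
    rw [hA]
    field_simp
    ring
  | .negSucc j =>
    have h₁ : ¬ (0 : ℤ) ≤ Int.negSucc j := by omega
    have h₂ : Int.negSucc j ≠ 0 := by omega
    have h₃ : (0 : ℤ) ≤ - Int.negSucc j := by omega
    have h₄ : (- Int.negSucc j).toNat = j + 1 := by omega
    rw [if_neg h₁, if_neg h₂, if_pos h₃, h₄]
    change _ = κ * (1 - c ^ 2) * c ^ j
    rw [hB]
    field_simp
    ring

section Determinants

open Matrix

theorem det_fromBlocks_smul_one {n : Type*} [Fintype n] [DecidableEq n] (s : ℂ)
    (B C : Matrix n n ℂ) :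
    (fromBlocks (s • (1 : Matrix n n ℂ)) B C (s • (1 : Matrix n n ℂ))).det =
      (s ^ 2 • (1 : Matrix n n ℂ) - B * C).det := by
  have hl : Continuous fun s : ℂ =>
      (fromBlocks (s • (1 : Matrix n n ℂ)) B C (s • (1 : Matrix n n ℂ))).det := by
    refine Continuous.matrix_det (Continuous.matrix_fromBlocks ?_ ?_ ?_ ?_) <;> fun_prop
  have hr : Continuous fun s : ℂ => (s ^ 2 • (1 : Matrix n n ℂ) - B * C).det :=
    Continuous.matrix_det (by fun_prop)
  refine congrFun (Continuous.ext_on (dense_compl_singleton (0 : ℂ)) hl hr fun s hs => ?_) s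
  have hmul : fromBlocks (s • (1 : Matrix n n ℂ)) B C (s • (1 : Matrix n n ℂ)) *
      fromBlocks (s • (1 : Matrix n n ℂ)) 0 (-C) 1 =
      fromBlocks (s ^ 2 • (1 : Matrix n n ℂ) - B * C) B 0 (s • (1 : Matrix n n ℂ)) := by
    rw [fromBlocks_multiply]
    simp [sub_eq_add_neg, smul_smul, pow_two]
  have hdet := congrArg det hmul
  rw [det_mul, det_fromBlocks_zero₁₂, det_fromBlocks_zero₂₁, det_one, mul_one, det_smul, det_one,
    mul_one] at hdet
  exact mul_right_cancel₀ (pow_ne_zero _ hs) hdet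

theorem det_smul_one_sub_mul_of_two_le {N : ℕ} (hN : 2 ≤ N) (μ : ℂ)
    (P : Matrix (Fin N) (Fin 2) ℂ) (Q : Matrix (Fin 2) (Fin N) ℂ) :
    (μ • (1 : Matrix (Fin N) (Fin N) ℂ) - P * Q).det =
      μ ^ (N - 2) * (μ • (1 : Matrix (Fin 2) (Fin 2) ℂ) - Q * P).det := by
  have h := congrArg (Polynomial.eval μ) (charpoly_mul_comm_of_le P Q (by simpa using hN))
  rw [Polynomial.eval_mul, eval_charpoly, eval_charpoly] at h
  simpa [smul_one_eq_diagonal] using h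

theorem blockToeplitzDet_eq_det {N : ℕ} (s : ℂ) (u : ℂ → ℂ) :
    blockToeplitzDet (fun w => !![s, u w; -u w⁻¹, s]) N =
      (s ^ 2 • (1 : Matrix (Fin N) (Fin N) ℂ) +
        (Matrix.of fun m n : Fin N => symbolCoeff u ((m : ℤ) - n)) *
          (Matrix.of fun m n : Fin N => symbolCoeff u ((m : ℤ) - n))ᵀ).det := by
  set T : Matrix (Fin N) (Fin N) ℂ := Matrix.of fun m n => symbolCoeff u ((m : ℤ) - n) with hT
  let e : Fin N × Fin 2 ≃ Fin N ⊕ Fin N :=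
    (Equiv.prodComm _ _).trans
      ((Equiv.prodCongr finTwoEquiv (Equiv.refl _)).trans (Equiv.boolProdEquivSum _))
  have hsub : (Matrix.of fun p q : Fin N × Fin 2 =>
      blockSymbolCoeff (fun w => !![s, u w; -u w⁻¹, s]) ((p.1 : ℤ) - (q.1 : ℤ)) p.2 q.2) =
      (fromBlocks (s • (1 : Matrix (Fin N) (Fin N) ℂ)) T (-Tᵀ) (s • 1)).submatrix e e := by
    ext ⟨m, i⟩ ⟨n, j⟩
    have hmn : ((m : ℤ) - n = 0) ↔ m = n := by omega
    fin_cases i <;> fin_cases j <;>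
      simp [e, blockSymbolCoeff, Equiv.boolProdEquivSum, finTwoEquiv, hT, symbolCoeff_const,
        symbolCoeff_neg, symbolCoeff_comp_inv u, Matrix.one_apply, hmn]
  rw [blockToeplitzDet, hsub, det_submatrix_equiv_self, det_fromBlocks_smul_one, mul_neg,
    sub_neg_eq_add]

end Determinants

section Gram

variable {a c : ℂ}

theorem blaschkeCoeff_zero :
    blaschkeCoeff a c 0 = (1 - a ^ 2 - c ^ 2 + a * c) / (1 - a * c) := rfl

theorem blaschkeCoeff_of_eq_add_one {k : ℤ} {j : ℕ} (h : k = j + 1) :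
    blaschkeCoeff a c k = -((c - a) / (1 - a * c) * (1 - a ^ 2) * a ^ j) := by
  subst h; rfl

theorem blaschkeCoeff_of_eq_neg {k : ℤ} {j : ℕ} (h : k = -(j + 1)) :
    blaschkeCoeff a c k = (c - a) / (1 - a * c) * (1 - c ^ 2) * c ^ j := by
  rw [show k = Int.negSucc j by omega]; rfl

theorem sum_blaschkeCoeff_mul_range_succ (hac : 1 - a * c ≠ 0) (d : ℕ) :
    ∑ k ∈ Finset.range (d + 1), blaschkeCoeff a c (-(k : ℤ)) * blaschkeCoeff a c ((d : ℤ) - k) =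
      (if d = 0 then 1 else 0) - ((c - a) / (1 - a * c)) ^ 2 *
        ((1 - a ^ 2) * a ^ d + (1 - c ^ 2) * c ^ d) := by
  rcases d with _ | d
  · simp only [zero_add, Finset.sum_range_one, Nat.cast_zero, neg_zero, sub_zero,
      blaschkeCoeff_zero]
    simp only [if_true]
    field_simp
    ring
  · have hmid : ∑ k ∈ Finset.range d, blaschkeCoeff a c (-((k + 1 : ℕ) : ℤ)) *
        blaschkeCoeff a c (((d + 1 : ℕ) : ℤ) - (k + 1 : ℕ)) =
        -(((c - a) / (1 - a * c)) * (1 - a ^ 2) * (1 - c ^ 2) * (c ^ d - a ^ d) /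
          (1 - a * c)) := by
      rw [← geom_sum₂_mul, Finset.sum_mul, Finset.mul_sum, Finset.sum_div, ← Finset.sum_neg_distrib]
      refine Finset.sum_congr rfl fun k hk => ?_
      have hk := Finset.mem_range.mp hk
      rw [blaschkeCoeff_of_eq_neg (j := k) (by push_cast; ring),
        blaschkeCoeff_of_eq_add_one (j := d - 1 - k) (by omega)]
      field_simp
    rw [Finset.sum_range_succ', Finset.sum_range_succ, hmid,
      blaschkeCoeff_of_eq_neg (j := d) (by push_cast; ring),
      blaschkeCoeff_of_eq_add_one (k := ((d + 1 : ℕ) : ℤ) - ((0 : ℕ) : ℤ)) (j := d) (by simp)]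
    simp only [sub_self, Nat.cast_zero, neg_zero, blaschkeCoeff_zero, Nat.add_eq_zero_iff,
      one_ne_zero, and_false, if_false]
    field_simp
    ring

theorem sum_blaschkeCoeff_mul_of_add (hac : 1 - a * c ≠ 0) (d m e : ℕ) :
    ∑ k ∈ Finset.range (d + 1 + m + e),
      blaschkeCoeff a c ((m : ℤ) - k) * blaschkeCoeff a c (((m + d : ℕ) : ℤ) - k) =
      (if d = 0 then 1 else 0) - ((c - a) / (1 - a * c)) ^ 2 *
        ((1 - a ^ 2) * a ^ (2 * m + d) + (1 - c ^ 2) * c ^ (2 * e + d)) := by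
  induction e with
  | zero =>
    induction m with
    | zero => simpa using sum_blaschkeCoeff_mul_range_succ hac d
    | succ m ih =>
      rw [show d + 1 + (m + 1) + 0 = (d + 1 + m) + 1 by ring, Finset.sum_range_succ',
        blaschkeCoeff_of_eq_add_one (k := ((m + 1 : ℕ) : ℤ) - ((0 : ℕ) : ℤ)) (j := m) (by simp),
        blaschkeCoeff_of_eq_add_one (k := ((m + 1 + d : ℕ) : ℤ) - ((0 : ℕ) : ℤ)) (j := m + d)
          (by push_cast; ring)]
      have hshift (k : ℕ) : ((m + 1 : ℕ) : ℤ) - ((k + 1 : ℕ) : ℤ) = (m : ℤ) - k ∧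
          ((m + 1 + d : ℕ) : ℤ) - ((k + 1 : ℕ) : ℤ) = ((m + d : ℕ) : ℤ) - k := by omega
      simp only [(hshift _).1, (hshift _).2]
      rw [add_zero] at ih
      rw [ih]
      ring
  | succ e ih =>
    rw [← add_assoc, Finset.sum_range_succ, ih,
      blaschkeCoeff_of_eq_neg (k := (m : ℤ) - ((d + 1 + m + e : ℕ) : ℤ)) (j := d + e)
        (by push_cast; ring),
      blaschkeCoeff_of_eq_neg (k := ((m + d : ℕ) : ℤ) - ((d + 1 + m + e : ℕ) : ℤ)) (j := e)
        (by push_cast; ring)]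
    ring

/-- The finite section of the unimodular symbol is an isometry up to a correction of rank two. -/
theorem sum_blaschkeCoeff_mul (hac : 1 - a * c ≠ 0) {N : ℕ} (m n : Fin N) :
    ∑ k : Fin N, blaschkeCoeff a c ((m : ℤ) - k) * blaschkeCoeff a c ((n : ℤ) - k) =
      (if m = n then 1 else 0) - ((c - a) / (1 - a * c)) ^ 2 *
        ((1 - a ^ 2) * (a ^ (m : ℕ) * a ^ (n : ℕ)) +
          (1 - c ^ 2) * (c ^ (N - 1 - m : ℕ) * c ^ (N - 1 - n : ℕ))) := by
  wlog hmn : (m : ℕ) ≤ n generalizing m n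
  · have h := this n m (by omega)
    simp only [mul_comm (blaschkeCoeff a c ((m : ℤ) - _)), h, eq_comm (a := m),
      mul_comm (a ^ (m : ℕ)), mul_comm (c ^ (N - 1 - m : ℕ))]
  · obtain ⟨d, hd⟩ := Nat.exists_eq_add_of_le hmn
    obtain ⟨e, he⟩ := Nat.exists_eq_add_of_le (Nat.succ_le_of_lt n.isLt)
    have hN : N = d + 1 + m + e := by omega
    have h := sum_blaschkeCoeff_mul_of_add hac d m e
    rw [← hN, ← hd, Finset.sum_range] at h
    rw [h, ← pow_add, ← pow_add, show (m : ℕ) + n = 2 * m + d by omega,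
      show N - 1 - (m : ℕ) + (N - 1 - n) = 2 * e + d by omega]
    have : d = 0 ↔ m = n := by omega
    simp only [this]

end Gram

section CharPoly

open Matrix

theorem det_blaschke_gram {a c : ℂ} (hac : 1 - a * c ≠ 0) {N : ℕ} (hN : 2 ≤ N) (t : ℂ) :
    (t • (1 : Matrix (Fin N) (Fin N) ℂ) +
        (Matrix.of fun m n : Fin N => blaschkeCoeff a c ((m : ℤ) - n)) *
          (Matrix.of fun m n : Fin N => blaschkeCoeff a c ((m : ℤ) - n))ᵀ).det =
      (1 + t) ^ (N - 2) *
        ((1 + t - ((c - a) / (1 - a * c)) ^ 2 * (1 - a ^ (2 * N))) *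
          (1 + t - ((c - a) / (1 - a * c)) ^ 2 * (1 - c ^ (2 * N))) -
          ((c - a) / (1 - a * c)) ^ 2 * (1 - a ^ 2) * (1 - c ^ 2) * (c ^ N - a ^ N) ^ 2 /
            (1 - a * c) ^ 2) := by
  set K := ((c - a) / (1 - a * c)) ^ 2 with hK
  let P : Matrix (Fin N) (Fin 2) ℂ :=
    Matrix.of fun m => ![K * (1 - a ^ 2) * a ^ (m : ℕ), K * (1 - c ^ 2) * c ^ (N - 1 - m : ℕ)]
  let Q : Matrix (Fin 2) (Fin N) ℂ :=
    Matrix.of ![fun n => a ^ (n : ℕ), fun n => c ^ (N - 1 - n : ℕ)]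
  have hPQ : t • (1 : Matrix (Fin N) (Fin N) ℂ) +
        (Matrix.of fun m n : Fin N => blaschkeCoeff a c ((m : ℤ) - n)) *
          (Matrix.of fun m n : Fin N => blaschkeCoeff a c ((m : ℤ) - n))ᵀ =
      (1 + t) • (1 : Matrix (Fin N) (Fin N) ℂ) - P * Q := by
    ext m n
    have h := sum_blaschkeCoeff_mul hac m n
    rw [← hK] at h
    simp only [Matrix.add_apply, Matrix.sub_apply, Matrix.smul_apply, Matrix.mul_apply,
      Matrix.transpose_apply, Matrix.of_apply, Matrix.one_apply, h, smul_eq_mul, P, Q,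
      Fin.sum_univ_two, Matrix.cons_val_zero, Matrix.cons_val_one]
    ring
  have haa : (∑ m : Fin N, a ^ (m : ℕ) * a ^ (m : ℕ)) * (1 - a ^ 2) = 1 - a ^ (2 * N) := by
    rw [← Finset.sum_range (fun m => a ^ m * a ^ m), pow_mul,
      ← geom_sum_mul_neg (_ ^ 2)]
    simp only [← pow_mul, two_mul, ← pow_add]
  have hcc : (∑ m : Fin N, c ^ (N - 1 - m : ℕ) * c ^ (N - 1 - m : ℕ)) * (1 - c ^ 2) =
      1 - c ^ (2 * N) := by
    rw [← Finset.sum_range (fun m => c ^ (N - 1 - m) * c ^ (N - 1 - m)),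
      Finset.sum_range_reflect (fun m => c ^ m * c ^ m), pow_mul,
      ← geom_sum_mul_neg (_ ^ 2)]
    simp only [← pow_mul, two_mul, ← pow_add]
  have hca : (∑ m : Fin N, a ^ (m : ℕ) * c ^ (N - 1 - m : ℕ)) * (a - c) = a ^ N - c ^ N := by
    rw [← Finset.sum_range (fun m => a ^ m * c ^ (N - 1 - m)), geom_sum₂_mul]
  set S := ∑ m : Fin N, a ^ (m : ℕ) * c ^ (N - 1 - m : ℕ) with hS
  have h00 : (Q * P) 0 0 = K * (1 - a ^ (2 * N)) := by
    rw [← haa]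
    simp only [Matrix.mul_apply, Q, P, Matrix.of_apply, Matrix.cons_val_zero, Finset.sum_mul,
      Finset.mul_sum]
    exact Finset.sum_congr rfl fun _ _ => by ring
  have h11 : (Q * P) 1 1 = K * (1 - c ^ (2 * N)) := by
    rw [← hcc]
    simp only [Matrix.mul_apply, Q, P, Matrix.of_apply, Matrix.cons_val_one, Matrix.cons_val_fin_one,
      Finset.sum_mul,
      Finset.mul_sum]
    exact Finset.sum_congr rfl fun _ _ => by ring
  have h01 : (Q * P) 0 1 = K * (1 - c ^ 2) * S := by
    simp only [Matrix.mul_apply, Q, P, Matrix.of_apply, Matrix.cons_val_zero, Matrix.cons_val_one,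
      hS, Finset.mul_sum]
    exact Finset.sum_congr rfl fun _ _ => by ring
  have h10 : (Q * P) 1 0 = K * (1 - a ^ 2) * S := by
    simp only [Matrix.mul_apply, Q, P, Matrix.of_apply, Matrix.cons_val_zero, Matrix.cons_val_one,
      hS, Finset.mul_sum]
    exact Finset.sum_congr rfl fun _ _ => by ring
  have hKS : K * S ^ 2 = (c ^ N - a ^ N) ^ 2 / (1 - a * c) ^ 2 := by
    rw [hK, show (c ^ N - a ^ N) ^ 2 = (a ^ N - c ^ N) ^ 2 by ring, ← hca]
    field_simp
    ring
  rw [hPQ, det_smul_one_sub_mul_of_two_le hN, det_fin_two]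
  simp only [Matrix.sub_apply, Matrix.smul_apply, h00, h01, h10, h11, Matrix.one_apply_eq,
    smul_eq_mul, mul_one]
  rw [Matrix.one_apply_ne (by decide), Matrix.one_apply_ne (by decide)]
  linear_combination (-(1 + t) ^ (N - 2) * K * (1 - a ^ 2) * (1 - c ^ 2)) * hKS

end CharPoly

/-- Example 3 (one zero inside, one outside): characteristic polynomial of the correlation
matrix for `f(z) = z⁻²(z−a)²(z−b)²` with `0 < |a| < 1 < |b|` and `ab ≠ 1`. -/
theorem example_three_char_poly
    (a b : ℝ) (ha0 : 0 < |a|) (ha1 : |a| < 1) (hb : 1 < |b|) (hab : a * b ≠ 1)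
    (N : ℕ) (hN : 2 ≤ N) (lam : ℂ) :
    blockToeplitzDet
      (fun w => !![Complex.I * lam,
                   ((w - (a : ℂ)) * (w - (b : ℂ))) / ((1 - (a : ℂ) * w) * (1 - (b : ℂ) * w));
                   -(((w⁻¹ - (a : ℂ)) * (w⁻¹ - (b : ℂ))) /
                      ((1 - (a : ℂ) * w⁻¹) * (1 - (b : ℂ) * w⁻¹))),
                   Complex.I * lam]) N
      = (1 - lam ^ 2) ^ (N - 2) *
        (lam ^ 4 +
          (lam ^ 2 / ((b : ℂ) - a) ^ 2) *
            (2 * (1 - (a : ℂ) ^ 2) * (1 - (b : ℂ) ^ 2) -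
              (1 - (a : ℂ) * b) ^ 2 * ((a : ℂ) ^ (2 * N) + (b : ℂ) ^ (-(2 * (N : ℤ))))) +
          (((a : ℂ) ^ N * (b : ℂ) ^ (-(N : ℤ)) * (1 - (a : ℂ) * b) ^ 2 -
              (1 - (a : ℂ) ^ 2) * (1 - (b : ℂ) ^ 2)) / ((b : ℂ) - a) ^ 2) ^ 2) := by
  have hA0 : (a : ℂ) ≠ 0 := by exact_mod_cast abs_pos.mp ha0
  have hb0 : b ≠ 0 := abs_pos.mp (by linarith)
  obtain ⟨c, hc⟩ : ∃ c : ℂ, (b : ℂ) = c⁻¹ := ⟨(b : ℂ)⁻¹, by rw [inv_inv]⟩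
  have hc0 : c ≠ 0 := by
    rintro rfl
    exact hb0 (by simpa using hc)
  have hA1 : ‖(a : ℂ)‖ < 1 := by simpa using ha1
  have hc1 : ‖c‖ < 1 := by
    rw [← inv_inv c, ← hc, norm_inv]
    exact inv_lt_one_of_one_lt₀ (by simpa using hb)
  have hac : 1 - (a : ℂ) * c ≠ 0 := one_sub_mul_ne_zero hA1 hc1.le
  rw [blockToeplitzDet_eq_det (Complex.I * lam)
    (fun w => ((w - (a : ℂ)) * (w - (b : ℂ))) / ((1 - (a : ℂ) * w) * (1 - (b : ℂ) * w))), hc]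
  simp only [symbolCoeff_blaschke hA0 hc0 hA1 hc1]
  rw [det_blaschke_gram hac hN, mul_pow, Complex.I_sq, neg_one_mul, ← sub_eq_add_neg]
  have hp : (c⁻¹ : ℂ) ^ (-(N : ℤ)) = c ^ N := by simp
  have hp2 : (c⁻¹ : ℂ) ^ (-(2 * (N : ℤ))) = (c ^ N) ^ 2 := by
    rw [mul_comm, ← neg_mul, zpow_mul, hp]; norm_cast
  have hd : c⁻¹ - (a : ℂ) = (1 - a * c) / c := by field_simp
  have hd₂ : 1 - (a : ℂ) * c⁻¹ = (c - a) / c := by field_simp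
  have hd₃ : 1 - (c⁻¹ : ℂ) ^ 2 = (c ^ 2 - 1) / c ^ 2 := by field_simp
  rw [hp, hp2, hd, hd₂, hd₃, pow_mul', pow_mul']
  congr 1
  generalize (a : ℂ) ^ N = p
  generalize c ^ N = q
  have hca : 1 - c * (a : ℂ) ≠ 0 := by rwa [mul_comm]
  field_simp
  ring
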